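/- arXiv:2209.02990 — 3 statements merged into one kernel-verified Lean document; each statement's English description precedes it below -/
import Mathlib

section
/- Let u and v be distinct elements of a set V, let k ≥ 1 and f ≥ 1 be integers, and let 𝒬 and 𝒫 be finite families of finite subsets of V such that: every Q ∈ 𝒬 contains u and does not contain v, and any two distinct members of 𝒬 intersect exactly in {u}; every P ∈ 𝒫 contains v and does not contain u, has at most k+1 elements, and any two distinct members of 𝒫 intersect exactly in {v}; every Q ∈ 𝒬 intersects at least one member of 𝒫; and |𝒬| ≥ 5·k·f. Then there exist 3f pairs (Q₁,P₁), …, (Q_{3f},P_{3f}) ∈ 𝒬 × 𝒫 such that Q_j ∩ P_j ≠ ∅ for every j ∈ {1,…,3f}, the sets Q₁, …, Q_{3f} are pairwise distinct (hence pairwise intersect only in {u}), and the sets P₁, …, P_{3f} are pairwise distinct (hence pairwise intersect only in {v}). -/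
/-! Send each `A ∈ Q` to some `g A ∈ P` that it meets. The members of `Q` sent to a given `B` meet
`B` in pairwise disjoint nonempty sets, none of which contains `u` or `v`, so there are at most
`#(B.erase v) ≤ k` of them. Hence `g` takes at least `#Q / k` values, and choosing one preimage for
each value gives the pairs. -/

theorem card_le_card_of_pairwise_inter_subset {V : Type*} [DecidableEq V]
    {S : Finset (Finset V)} {K C : Finset V}
    (hS : (S : Set (Finset V)).Pairwise fun A A' => A ∩ A' ⊆ K) (hKC : Disjoint K C)
    (hmeet : ∀ A ∈ S, (A ∩ C).Nonempty) : S.card ≤ C.card := by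
  refine Finset.card_le_card_of_forall_subsingleton (fun A x => x ∈ A) ?_ ?_
  · intro A hA
    obtain ⟨x, hx⟩ := hmeet A hA
    exact ⟨x, Finset.mem_of_mem_inter_right hx, Finset.mem_of_mem_inter_left hx⟩
  · rintro x hxC A ⟨hA, hxA⟩ A' ⟨hA', hxA'⟩
    by_contra hne
    have hxK : x ∈ K := hS hA hA' hne (Finset.mem_inter.2 ⟨hxA, hxA'⟩)
    exact Finset.disjoint_left.1 hKC hxK hxC

theorem exists_fin_comp_injective_of_card_fiber_le {α β : Type*} [DecidableEq β]
    {s : Finset α} {g : α → β} {k m : ℕ} (hk : 0 < k)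
    (hfiber : ∀ b ∈ s.image g, (s.filter fun a => g a = b).card ≤ k) (hm : k * m ≤ s.card) :
    ∃ a : Fin m → α, (∀ j, a j ∈ s) ∧ Function.Injective (g ∘ a) := by
  have himage : m ≤ (s.image g).card :=
    Nat.le_of_mul_le_mul_left (hm.trans (Finset.card_le_mul_card_image s k hfiber)) hk
  obtain ⟨b⟩ : Nonempty (Fin m ↪ s.image g) :=
    Function.Embedding.nonempty_of_card_le (by simpa using himage)
  choose a has hab using fun j => Finset.mem_image.1 (b j).2
  have hcomp : g ∘ a = Subtype.val ∘ b := funext hab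
  exact ⟨a, has, hcomp ▸ Subtype.val_injective.comp b.injective⟩

theorem key_structural_lemma_general {V : Type*} [DecidableEq V] {u v : V} {k m : ℕ}
    (hk : 0 < k) {Q P : Finset (Finset V)} (hQv : ∀ A ∈ Q, v ∉ A)
    (hQ : (Q : Set (Finset V)).Pairwise fun A A' => A ∩ A' ⊆ {u})
    (hP : ∀ B ∈ P, u ∉ B ∧ (B.erase v).card ≤ k)
    (hhit : ∀ A ∈ Q, ∃ B ∈ P, (A ∩ B).Nonempty) (hcard : k * m ≤ Q.card) :
    ∃ Qs Ps : Fin m → Finset V,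
      (∀ j, Qs j ∈ Q ∧ Ps j ∈ P ∧ (Qs j ∩ Ps j).Nonempty) ∧
      Function.Injective Qs ∧ Function.Injective Ps := by
  choose! g hgP hg using hhit
  have hfiber : ∀ B ∈ Q.image g, (Q.filter fun A => g A = B).card ≤ k := by
    refine Finset.forall_mem_image.2 fun A₀ hA₀ => ?_
    obtain ⟨hu, hle⟩ := hP _ (hgP A₀ hA₀)
    have hcore : (Q.filter (g · = g A₀) : Set (Finset V)).Pairwise fun A A' => A ∩ A' ⊆ {u} :=
      hQ.mono (Finset.coe_subset.2 (Finset.filter_subset _ Q))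
    have hdisj : Disjoint {u} ((g A₀).erase v) :=
      Finset.disjoint_singleton_left.2 fun h => hu (Finset.mem_of_mem_erase h)
    refine (card_le_card_of_pairwise_inter_subset hcore hdisj fun A hA => ?_).trans hle
    obtain ⟨hAQ, hgA⟩ := Finset.mem_filter.1 hA
    have hv : v ∉ A ∩ g A₀ := fun h => hQv A hAQ (Finset.mem_of_mem_inter_left h)
    rw [Finset.inter_erase, Finset.erase_eq_of_notMem hv, ← hgA]
    exact hg A hAQ
  obtain ⟨Qs, hQs, hinj⟩ := exists_fin_comp_injective_of_card_fiber_le hk hfiber hcard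
  exact ⟨Qs, g ∘ Qs, fun j => ⟨hQs j, hgP _ (hQs j), hg _ (hQs j)⟩, hinj.of_comp, hinj⟩

theorem key_structural_lemma
    {V : Type} [DecidableEq V] (u v : V) (huv : u ≠ v)
    (k f : ℕ) (hk : 1 ≤ k) (hf : 1 ≤ f)
    (Q P : Finset (Finset V))
    (hQmem : ∀ A ∈ Q, u ∈ A ∧ v ∉ A)
    (hQdisj : ∀ A ∈ Q, ∀ B ∈ Q, A ≠ B → A ∩ B = {u})
    (hPmem : ∀ A ∈ P, v ∈ A ∧ u ∉ A ∧ A.card ≤ k + 1)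
    (hPdisj : ∀ A ∈ P, ∀ B ∈ P, A ≠ B → A ∩ B = {v})
    (hhit : ∀ A ∈ Q, ∃ B ∈ P, (A ∩ B).Nonempty)
    (hcard : 5 * k * f ≤ Q.card) :
    ∃ Qs Ps : Fin (3 * f) → Finset V,
      (∀ j, Qs j ∈ Q ∧ Ps j ∈ P ∧ (Qs j ∩ Ps j).Nonempty) ∧
      Function.Injective Qs ∧ Function.Injective Ps := by
  exact key_structural_lemma_general hk (fun A hA => (hQmem A hA).2)
    (fun A hA B hB hne => (hQdisj A hA B hB hne).subset) (by grind) hhit (by linarith)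
end

section
/- Let G = (V,E) be a finite simple undirected graph and let T₁, …, T_ℓ be subgraphs of G, where each T_i is a tree with a designated root s_i. Suppose the trees are vertex-independent: for every vertex x ∈ V and all indices i ≠ j such that x belongs to both T_i and T_j, the unique path from s_i to x in T_i and the unique path from s_j to x in T_j share no vertex other than x. Then every edge of G belongs to at most two of the trees T₁, …, T_ℓ. -/
open SimpleGraph

/-!
Orient each edge of a tree away from the root: an edge `uv` of `T i` makes `u` an ancestor of `v` or
`v` an ancestor of `u`. By independence, each of the two orientations occurs in at most one tree.
-/

section

variable {V ι : Type*} {G : SimpleGraph V}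

/-- `a` is an ancestor of `x` in the subgraph `H` rooted at `r`: it lies on some path of `H` from
`r` to `x`. In a tree that path is unique and this is the usual ancestor relation; the vertices are
taken in `V`, so that ancestry can be compared between different subgraphs. -/
def IsAncestor (H : G.Subgraph) (r : H.verts) (a x : V) : Prop :=
  ∃ (ha : a ∈ H.verts) (hx : x ∈ H.verts) (p : H.coe.Walk r ⟨x, hx⟩),
    p.IsPath ∧ ⟨a, ha⟩ ∈ p.support

/-- Vertex-independence of a family of rooted subgraphs: root-to-`x` paths in two different members
share only `x`, that is, the only ancestor of `x` common to both is `x` itself. -/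
def VertexIndependent (T : ι → G.Subgraph) (s : ∀ i, (T i).verts) : Prop :=
  Pairwise fun i j ↦
    ∀ ⦃a x : V⦄, IsAncestor (T i) (s i) a x → IsAncestor (T j) (s j) a x → a = x

theorem isAncestor_or_isAncestor_of_adj {H : G.Subgraph} {r : H.verts} {u v : V}
    (huv : H.Adj u v) (hru : H.coe.Reachable r ⟨u, huv.fst_mem⟩) :
    IsAncestor H r u v ∨ IsAncestor H r v u := by
  obtain ⟨p, hp⟩ := hru.exists_isPath
  by_cases hv : ⟨v, huv.snd_mem⟩ ∈ p.support
  · exact .inr ⟨_, _, p, hp, hv⟩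
  · have hu : ⟨u, huv.fst_mem⟩ ∈ (p.concat huv.coe).support :=
      p.support_subset_support_concat huv.coe p.end_mem_support
    exact .inl ⟨_, _, p.concat huv.coe, hp.concat hv huv.coe, hu⟩

theorem VertexIndependent.subsingleton_setOf_isAncestor {T : ι → G.Subgraph}
    {s : ∀ i, (T i).verts} (hT : VertexIndependent T s) {a x : V} (hax : a ≠ x) :
    {i | IsAncestor (T i) (s i) a x}.Subsingleton :=
  fun _ hi _ hj ↦ by_contra fun hij ↦ hax (hT hij hi hj)

theorem vertex_independent_trees_edge_multiplicity_general {T : ι → G.Subgraph}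
    {s : ∀ i, (T i).verts} (hconn : ∀ i, (T i).Preconnected) (hT : VertexIndependent T s)
    {e : Sym2 V} (he : e ∈ G.edgeSet) : {i | e ∈ (T i).edgeSet}.encard ≤ 2 := by
  induction e with | _ u v
  have huv : u ≠ v := G.ne_of_adj he
  have hcover : {i | s(u, v) ∈ (T i).edgeSet} ⊆
      {i | IsAncestor (T i) (s i) u v} ∪ {i | IsAncestor (T i) (s i) v u} := fun i hi ↦
    isAncestor_or_isAncestor_of_adj hi ((hconn i).coe _ _)
  calc {i | s(u, v) ∈ (T i).edgeSet}.encard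
    _ ≤ ({i | IsAncestor (T i) (s i) u v} ∪ {i | IsAncestor (T i) (s i) v u}).encard :=
      Set.encard_le_encard hcover
    _ ≤ {i | IsAncestor (T i) (s i) u v}.encard + {i | IsAncestor (T i) (s i) v u}.encard :=
      Set.encard_union_le _ _
    _ ≤ 1 + 1 := add_le_add
      (Set.encard_le_one_iff_subsingleton.mpr (hT.subsingleton_setOf_isAncestor huv))
      (Set.encard_le_one_iff_subsingleton.mpr (hT.subsingleton_setOf_isAncestor huv.symm))
    _ = 2 := one_add_one_eq_two

end

theorem vertex_independent_trees_edge_multiplicity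
    {V : Type} [Fintype V] (G : SimpleGraph V) (ℓ : ℕ)
    (T : Fin ℓ → G.Subgraph) (s : Fin ℓ → V)
    (hroot : ∀ i, s i ∈ (T i).verts)
    (htree : ∀ i, (T i).coe.IsTree)
    (hindep : ∀ i j, i ≠ j →
      ∀ (x : V) (hxi : x ∈ (T i).verts) (hxj : x ∈ (T j).verts),
      ∀ (p : (T i).coe.Walk ⟨s i, hroot i⟩ ⟨x, hxi⟩)
        (q : (T j).coe.Walk ⟨s j, hroot j⟩ ⟨x, hxj⟩),
        p.IsPath → q.IsPath →
        ∀ (a : (T i).verts) (b : (T j).verts),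
          a ∈ p.support → b ∈ q.support → (a : V) = (b : V) → (a : V) = x) :
    ∀ e ∈ G.edgeSet, {i : Fin ℓ | e ∈ (T i).edgeSet}.ncard ≤ 2 := by
  intro e he
  have hT : VertexIndependent T fun i ↦ ⟨s i, hroot i⟩ :=
    fun i j hij _ x ⟨_, hxi, p, hp, hap⟩ ⟨_, hxj, q, hq, haq⟩ ↦
      hindep i j hij x hxi hxj p q hp hq _ _ hap haq rfl
  exact ENat.toNat_le_of_le_natCast
    (vertex_independent_trees_edge_multiplicity_general (fun i ↦ ⟨(htree i).preconnected⟩) hT he)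
end

section
/- There is an absolute constant c > 0 with the following property. Let Δ ≥ 1, β ≥ 1 and ℓ ≥ 1 be integers, let R be a finite set, and let R₁, …, R_ℓ ⊆ R be subsets satisfying |R_i| ≥ c·β·Δ·log(ℓ+2) for every i ∈ {1,…,ℓ}. Then there exists a subset R* ⊆ R such that |R*| ≤ |R|/Δ and |R* ∩ R_i| ≥ β for every i ∈ {1,…,ℓ}. -/
/-!
Averaging over `R` finds an element lying in a `q`-fraction of the target sets whenever each target
occupies a `q`-fraction of `R`, so `k` greedy choices hit any family of fewer than `exp (q * k)`
targets. To hit every target `β` times, run `β` such rounds, each time aiming, for the targets hit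
too rarely so far, at the part not yet chosen: such a target has lost fewer than `β` elements, so it
still occupies a `q`-fraction of `R`. With `k` about `|R| / (Δ * β)` choices per round, the size
assumption makes `exp (q * k)` exceed the number of targets.
-/

open Finset Real

section

variable {α ι : Type*} [DecidableEq α] {R : Finset α} {s : Finset ι} {T : ι → Finset α} {q : ℝ}

lemma exists_mem_mul_card_le_card_filter_mem (hR : R.Nonempty)
    (hT : ∀ i ∈ s, q * #R ≤ #(R ∩ T i)) :
    ∃ x ∈ R, q * #s ≤ #{i ∈ s | x ∈ T i} := by
  refine exists_le_of_sum_le hR ?_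
  calc ∑ _x ∈ R, q * #s = ∑ _i ∈ s, q * #R := by
        simp only [sum_const, nsmul_eq_mul]
        ring
    _ ≤ ∑ i ∈ s, (#(R ∩ T i) : ℝ) := sum_le_sum hT
    _ = ∑ x ∈ R, (#{i ∈ s | x ∈ T i} : ℝ) := by
        simp only [← filter_mem_eq_inter]
        exact_mod_cast (sum_card_bipartiteAbove_eq_sum_card_bipartiteBelow
          (s := R) (t := s) fun x i ↦ x ∈ T i).symm

lemma exists_mem_card_filter_notMem_le_exp_neg_mul (hR : R.Nonempty)
    (hT : ∀ i ∈ s, q * #R ≤ #(R ∩ T i)) :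
    ∃ x ∈ R, (#{i ∈ s | x ∉ T i} : ℝ) ≤ exp (-q) * #s := by
  obtain ⟨x, hxR, hx⟩ := exists_mem_mul_card_le_card_filter_mem hR hT
  have hsplit : (#{i ∈ s | x ∈ T i} + #{i ∈ s | x ∉ T i} : ℝ) = #s := by
    exact_mod_cast card_filter_add_card_filter_not (s := s) fun i ↦ x ∈ T i
  refine ⟨x, hxR, ?_⟩
  calc (#{i ∈ s | x ∉ T i} : ℝ) ≤ (1 - q) * #s := by linarith
    _ ≤ exp (-q) * #s := by gcongr; exact one_sub_le_exp_neg q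

lemma exists_subset_card_le_forall_inter_nonempty {k : ℕ} (hR : R.Nonempty)
    (hT : ∀ i ∈ s, q * #R ≤ #(R ∩ T i)) (hs : #s < exp (q * k)) :
    ∃ S ⊆ R, #S ≤ k ∧ ∀ i ∈ s, (S ∩ T i).Nonempty := by
  induction k generalizing s with
  | zero =>
    obtain rfl : s = ∅ := by simpa using hs
    exact ⟨∅, by simp⟩
  | succ k ih =>
    obtain ⟨x, hxR, hx⟩ := exists_mem_card_filter_notMem_le_exp_neg_mul hR hT
    have hmissed : #{i ∈ s | x ∉ T i} < exp (q * k) :=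
      calc (#{i ∈ s | x ∉ T i} : ℝ) ≤ exp (-q) * #s := hx
        _ < exp (-q) * exp (q * (k + 1 : ℕ)) := by gcongr
        _ = exp (q * k) := by rw [← exp_add]; push_cast; ring_nf
    obtain ⟨S, hSR, hSk, hS⟩ := ih (fun i hi ↦ hT i (mem_of_mem_filter i hi)) hmissed
    refine ⟨insert x S, insert_subset hxR hSR, (card_insert_le x S).trans (by gcongr), ?_⟩
    intro i hi
    by_cases hxi : x ∈ T i
    · exact ⟨x, by simp [hxi]⟩
    · exact (hS i (by simp [hi, hxi])).mono (by gcongr; exact subset_insert x S)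

lemma card_inter_le_card_inter_sdiff_add (R S T : Finset α) :
    #(R ∩ T) ≤ #(R ∩ (T \ S)) + #(S ∩ T) :=
  calc #(R ∩ T) ≤ #(R ∩ (T \ S) ∪ S ∩ T) := card_le_card fun x hx ↦ by grind
    _ ≤ #(R ∩ (T \ S)) + #(S ∩ T) := card_union_le _ _

lemma card_inter_add_card_inter_sdiff_le (S S' T : Finset α) :
    #(S ∩ T) + #(S' ∩ (T \ S)) ≤ #((S ∪ S') ∩ T) :=
  calc #(S ∩ T) + #(S' ∩ (T \ S)) = #(S ∩ T ∪ S' ∩ (T \ S)) :=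
        (card_union_of_disjoint (disjoint_left.2 fun x hx ↦ by grind)).symm
    _ ≤ #((S ∪ S') ∩ T) := card_le_card fun x hx ↦ by grind

lemma exists_subset_card_le_mul_forall_le_card_inter {k β : ℕ} (hR : R.Nonempty)
    (hT : ∀ i ∈ s, q * #R + β ≤ #(R ∩ T i)) (hs : #s < exp (q * k)) :
    ∃ S ⊆ R, #S ≤ β * k ∧ ∀ i ∈ s, β ≤ #(S ∩ T i) := by
  induction β with
  | zero => exact ⟨∅, by simp⟩
  | succ β ih =>
    push_cast at hT
    obtain ⟨S, hSR, hSk, hS⟩ := ih fun i hi ↦ by linarith [hT i hi]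
    let deficient : Finset ι := {i ∈ s | #(S ∩ T i) ≤ β}
    have hlarge : ∀ i ∈ deficient, q * #R ≤ #(R ∩ (T i \ S)) := by
      intro i hi
      obtain ⟨his, hiβ⟩ := mem_filter.1 hi
      have hloss : (#(R ∩ T i) : ℝ) ≤ #(R ∩ (T i \ S)) + β := by
        exact_mod_cast (card_inter_le_card_inter_sdiff_add R S (T i)).trans (by gcongr)
      linarith [hT i his]
    have hfew : #deficient < exp (q * k) :=
      lt_of_le_of_lt (by gcongr; exact filter_subset _ _) hs
    obtain ⟨S', hSR', hSk', hS'⟩ := exists_subset_card_le_forall_inter_nonempty hR hlarge hfew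
    refine ⟨S ∪ S', union_subset hSR hSR', (card_union_le S S').trans (by linarith), ?_⟩
    intro i hi
    by_cases hiβ : #(S ∩ T i) ≤ β
    · calc β + 1 ≤ #(S ∩ T i) + #(S' ∩ (T i \ S)) :=
            add_le_add (hS i hi) (hS' i (mem_filter.2 ⟨hi, hiβ⟩)).card_pos
        _ ≤ #((S ∪ S') ∩ T i) := card_inter_add_card_inter_sdiff_le S S' (T i)
    · calc β + 1 ≤ #(S ∩ T i) := not_le.1 hiβ
        _ ≤ #((S ∪ S') ∩ T i) := by gcongr; exact subset_union_left

lemma exists_subset_card_le_mul_of_log_le {r : ℝ} {β : ℕ} (hR : R.Nonempty) (hr : 1 ≤ r)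
    (hT : ∀ i ∈ s, 2 * log (#s + 2) / r * #R + β ≤ #(R ∩ T i)) :
    ∃ S ⊆ R, #S ≤ β * r ∧ ∀ i ∈ s, β ≤ #(S ∩ T i) := by
  have hlog : 0 ≤ log (#s + 2 : ℝ) := log_nonneg (by linarith [(#s).cast_nonneg (α := ℝ)])
  have hs : #s < exp (2 * log (#s + 2) / r * ⌊r⌋₊) :=
    calc (#s : ℝ) < exp (log (#s + 2)) := by rw [exp_log (by positivity)]; linarith
      _ = exp (2 * log (#s + 2) / r * (r / 2)) := by congr 1; field_simp
      _ ≤ exp (2 * log (#s + 2) / r * ⌊r⌋₊) := by gcongr; exact (Nat.div_two_lt_floor hr).le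
  obtain ⟨S, hSR, hSr, hS⟩ := exists_subset_card_le_mul_forall_le_card_inter hR hT hs
  refine ⟨S, hSR, ?_, hS⟩
  calc (#S : ℝ) ≤ β * ⌊r⌋₊ := by exact_mod_cast hSr
    _ ≤ β * r := by gcongr; exact Nat.floor_le (by positivity)

theorem deterministic_hitting_sets_with_multiplicity_general {Δ : ℝ} {β : ℕ} (hΔ : 1 ≤ Δ)
    (hT : ∀ i ∈ s, 4 * β * Δ * log (#s + 2) ≤ #(R ∩ T i)) :
    ∃ S ⊆ R, #S ≤ #R / Δ ∧ ∀ i ∈ s, β ≤ #(S ∩ T i) := by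
  obtain rfl | ⟨i₀, hi₀⟩ := s.eq_empty_or_nonempty
  · exact ⟨∅, by simp, by rw [card_empty, Nat.cast_zero]; positivity, by simp⟩
  obtain rfl | hβ := β.eq_zero_or_pos
  · exact ⟨∅, by simp, by rw [card_empty, Nat.cast_zero]; positivity, by simp⟩
  have hβΔ : 0 < β * Δ := by positivity
  have hlog : 1 / 2 ≤ log (#s + 2 : ℝ) := by
    have : log 2 ≤ log (#s + 2 : ℝ) := log_le_log two_pos (by simp)
    linarith [log_two_gt_d9]
  have hβΔR : β * Δ ≤ #R :=
    calc β * Δ ≤ 4 * β * Δ * log (#s + 2) := by nlinarith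
      _ ≤ #(R ∩ T i₀) := hT i₀ hi₀
      _ ≤ #R := by gcongr; exact inter_subset_left
  have hR : 0 < (#R : ℝ) := hβΔ.trans_le hβΔR
  have hlarge : ∀ i ∈ s, 2 * log (#s + 2) / (#R / (β * Δ)) * #R + β ≤ #(R ∩ T i) := fun i hi ↦
    calc 2 * log (#s + 2) / (#R / (β * Δ)) * #R + β = 2 * β * Δ * log (#s + 2) + β := by
          field_simp
      _ ≤ 2 * β * Δ * log (#s + 2) + β * Δ := by
          gcongr
          exact le_mul_of_one_le_right (by positivity) hΔ
      _ ≤ 4 * β * Δ * log (#s + 2) := by nlinarith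
      _ ≤ #(R ∩ T i) := hT i hi
  have hround : β * (#R / (β * Δ)) = #R / Δ := by field_simp
  rw [← hround]
  exact exists_subset_card_le_mul_of_log_le (card_pos.1 (by exact_mod_cast hR))
    ((one_le_div hβΔ).2 hβΔR) hlarge

end

theorem deterministic_hitting_sets_with_multiplicity :
    ∃ c : ℝ, 0 < c ∧
      ∀ (α : Type) [DecidableEq α] (Δ β ℓ : ℕ),
        1 ≤ Δ → 1 ≤ β → 1 ≤ ℓ →
        ∀ (R : Finset α) (Ri : Fin ℓ → Finset α),
          (∀ i, Ri i ⊆ R) →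
          (∀ i, c * (β : ℝ) * (Δ : ℝ) * Real.log ((ℓ : ℝ) + 2) ≤ ((Ri i).card : ℝ)) →
          ∃ Rstar : Finset α, Rstar ⊆ R ∧
            ((Rstar.card : ℝ) ≤ (R.card : ℝ) / (Δ : ℝ)) ∧
            ∀ i, β ≤ (Rstar ∩ Ri i).card := by
  refine ⟨4, by norm_num, fun α _ Δ β ℓ hΔ _ _ R Ri hRi hcard ↦ ?_⟩
  simpa using deterministic_hitting_sets_with_multiplicity_general (s := univ) (T := Ri)
    (Nat.one_le_cast.2 hΔ) (by simpa [inter_eq_right.2 (hRi _)] using hcard)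
end
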